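/- arXiv:1505.04121 — 2 statements merged into one kernel-verified Lean document; each statement's English description precedes it below -/
import Mathlib

section
/- There exists λ ∈ ℝ such that: (i) the intermediate field generated over ℝ by {x, y + λz} is all of K; (ii) letting Φ : ℝ[S,T] → K be the ℝ-algebra homomorphism determined by Φ(S) = x and Φ(T) = y + λz, and J = ker Φ, the ideal J is prime, J is contained in the ideal (S,T) (every polynomial in J has zero constant term, so the plane curve V(J) passes through (0,0)), the quotient ring ℝ[S,T]/J has Krull dimension 1, and Φ induces an ℝ-algebra isomorphism from the fraction field of ℝ[S,T]/J onto K. -/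
open MvPolynomial

/-!
Both Krull dimensions are computed as the transcendence degree of the function field, by Noether
normalization. Since `K` has transcendence degree one, it is finite over `ℝ(x)`, and separable as
the characteristic is zero, so there are only finitely many fields between `ℝ(x)` and `K`. Hence two
distinct values of `λ` give the same field `ℝ(x, y + λz)`; this field contains `z`, then `y`, and so
it is `K`. Finally `J` is the preimage of `P` under the substitution `S ↦ X`, `T ↦ Y + λZ`, which
maps the origin of space to the origin of the plane.
-/

theorem range_fin_two {α : Type*} (f : Fin 2 → α) : Set.range f = {f 0, f 1} := by
  ext
  simp [Fin.exists_fin_two, eq_comm]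

theorem range_fin_three {α : Type*} (f : Fin 3 → α) : Set.range f = {f 0, f 1, f 2} := by
  ext
  simp [Fin.exists_fin_succ, eq_comm]

section KrullDimension

theorem ringKrullDim_eq_of_isIntegral (R S : Type*) [CommRing R] [CommRing S] [Algebra R S]
    [Algebra.IsIntegral R S] [FaithfulSMul R S] : ringKrullDim S = ringKrullDim R := by
  apply le_antisymm
  · exact Order.krullDim_le_of_strictMono (PrimeSpectrum.comap (algebraMap R S))
      fun _ _ h => Ideal.IsIntegral.comap_lt_comap h
  · refine iSup_le fun l => ?_
    obtain ⟨⟨Q, _, _⟩⟩ : Nonempty (l.head.asIdeal.primesOver S) := inferInstance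
    obtain ⟨L, hL, -, -⟩ := Ideal.exists_ltSeries_of_hasGoingUp l Q
    exact hL ▸ Order.LTSeries.length_le_krullDim L

theorem toENat_trdeg_eq_of_isAlgebraic (R S A : Type*) [CommRing R] [Nontrivial R]
    [CommRing S] [CommRing A] [NoZeroDivisors A] [Algebra R S] [Algebra S A] [Algebra R A]
    [IsScalarTower R S A] [FaithfulSMul R S] [FaithfulSMul S A] [Algebra.IsAlgebraic S A] :
    (Algebra.trdeg R A).toENat = (Algebra.trdeg R S).toENat := by
  have h := congrArg Cardinal.toENat (lift_trdeg_add_eq R S A)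
  have := FaithfulSMul.algebraMap_injective R S |>.nontrivial
  simpa [trdeg_eq_zero, eq_comm] using h

theorem ringKrullDim_eq_toENat_trdeg (k A : Type*) [Field k] [CommRing A] [IsDomain A]
    [Algebra k A] [Algebra.FiniteType k A] :
    ringKrullDim A = (Algebra.trdeg k A).toENat := by
  obtain ⟨n, g, hg, hgi⟩ := exists_integral_inj_algHom_of_fg k A
  algebraize [g.toRingHom]
  have : Algebra.IsIntegral (MvPolynomial (Fin n) k) A := ⟨hgi⟩
  have : FaithfulSMul (MvPolynomial (Fin n) k) A := (faithfulSMul_iff_algebraMap_injective _ _).2 hg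
  rw [ringKrullDim_eq_of_isIntegral (MvPolynomial (Fin n) k) A,
    toENat_trdeg_eq_of_isAlgebraic k (MvPolynomial (Fin n) k) A]
  simp

theorem ringKrullDim_eq_toENat_trdeg_of_isFractionRing (k A K : Type*) [Field k] [CommRing A]
    [Algebra k A] [Algebra.FiniteType k A] [Field K] [Algebra k K] [Algebra A K]
    [IsScalarTower k A K] [IsFractionRing A K] :
    ringKrullDim A = (Algebra.trdeg k K).toENat := by
  have : IsDomain A := (IsFractionRing.injective A K).isDomain _
  have : Algebra.IsAlgebraic A K := IsLocalization.isAlgebraic K (nonZeroDivisors A)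
  rw [ringKrullDim_eq_toENat_trdeg k A, toENat_trdeg_eq_of_isAlgebraic k A K]

end KrullDimension

section FunctionField
open scoped IntermediateField

variable {k K : Type*} [Field k] [Field K] [Algebra k K]

theorem isAlgebraic_adjoin_simple_of_trdeg_eq_one {x : K} (hx : Transcendental k x)
    (htr : Algebra.trdeg k K = 1) : Algebra.IsAlgebraic k⟮x⟯ K := by
  have hind : AlgebraicIndependent k fun _ : Unit => x := algebraicIndependent_unique_type_iff.2 hx
  have hbasis := hind.isTranscendenceBasis_of_lift_trdeg_le_of_finite (by simp [htr])
  have halg := hbasis.isAlgebraic_field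
  rwa [Set.range_const] at halg

theorem finite_intermediateField_of_isSeparable (F E : Type*) [Field F] [Field E] [Algebra F E]
    [Algebra.EssFiniteType F E] [Algebra.IsSeparable F E] : Finite (IntermediateField F E) := by
  have : FiniteDimensional F E := Algebra.finite_of_essFiniteType_of_isAlgebraic
  exact Field.finite_intermediateField_of_exists_primitive_element F E
    (Field.exists_primitive_element F E)

theorem finite_intermediateField_adjoin_simple_of_ringKrullDim_eq_one [CharZero k] (A : Type*)
    [CommRing A] [Algebra k A] [Algebra.FiniteType k A] [Algebra A K] [IsScalarTower k A K]
    [IsFractionRing A K] (hdim : ringKrullDim A = 1) {x : K} (hx : Transcendental k x) :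
    Finite (IntermediateField k⟮x⟯ K) := by
  have htr : Algebra.trdeg k K = 1 := by
    rw [ringKrullDim_eq_toENat_trdeg_of_isFractionRing k A K] at hdim
    exact Cardinal.toENat_eq_one.1 (by exact_mod_cast hdim)
  have : Algebra.IsAlgebraic k⟮x⟯ K := isAlgebraic_adjoin_simple_of_trdeg_eq_one hx htr
  have : Algebra.EssFiniteType A K := .of_isLocalization K (nonZeroDivisors A)
  have : Algebra.EssFiniteType k K := .comp k A K
  have : Algebra.EssFiniteType k⟮x⟯ K := .of_comp k k⟮x⟯ K
  exact finite_intermediateField_of_isSeparable k⟮x⟯ K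

theorem exists_adjoin_add_algebraMap_mul_eq (k : Type*) {F E : Type*} [Field k] [Infinite k]
    [Field F] [Field E] [Algebra k F] [Algebra k E] [Algebra F E] [IsScalarTower k F E]
    [Finite (IntermediateField F E)] (y z : E) :
    ∃ c : k, F⟮y + algebraMap k E c * z⟯ = F⟮y, z⟯ := by
  obtain ⟨c, d, hcd, heq⟩ := Finite.exists_ne_map_eq_of_infinite
    fun c : k => F⟮y + algebraMap k E c * z⟯
  set L := F⟮y + algebraMap k E c * z⟯
  have algebraMap_mem (M : IntermediateField F E) (a : k) : algebraMap k E a ∈ M :=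
    IsScalarTower.algebraMap_apply k F E a ▸ M.algebraMap_mem _
  have hc : y + algebraMap k E c * z ∈ L := IntermediateField.mem_adjoin_simple_self F _
  have hd : y + algebraMap k E d * z ∈ L := heq ▸ IntermediateField.mem_adjoin_simple_self F _
  have hz : z ∈ L := by
    have hsub : algebraMap k E (c - d) * z ∈ L := by
      convert L.sub_mem hc hd using 1
      rw [map_sub]
      ring
    have hne : algebraMap k E (c - d) ≠ 0 := by simpa [sub_eq_zero] using hcd
    simpa only [inv_mul_cancel_left₀ hne] using
      L.mul_mem (L.inv_mem (algebraMap_mem L (c - d))) hsub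
  have hy : y ∈ L := by simpa using L.sub_mem hc (L.mul_mem (algebraMap_mem L c) hz)
  refine ⟨c, le_antisymm ?_ ?_⟩
  · have hy' : y ∈ F⟮y, z⟯ := IntermediateField.subset_adjoin _ _ (by simp)
    have hz' : z ∈ F⟮y, z⟯ := IntermediateField.subset_adjoin _ _ (by simp)
    exact IntermediateField.adjoin_simple_le_iff.2
      (add_mem hy' (mul_mem (algebraMap_mem _ c) hz'))
  · exact IntermediateField.adjoin_le_iff.2 (Set.pair_subset hy hz)

theorem exists_adjoin_pair_eq_adjoin_triple [Infinite k] (x y z : K)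
    [Finite (IntermediateField k⟮x⟯ K)] :
    ∃ c : k, k⟮x, y + algebraMap k K c * z⟯ = k⟮x, y, z⟯ := by
  obtain ⟨c, hc⟩ := exists_adjoin_add_algebraMap_mul_eq k (F := k⟮x⟯) y z
  refine ⟨c, ?_⟩
  simpa only [IntermediateField.adjoin_adjoin_left, Set.singleton_union] using
    congrArg (IntermediateField.restrictScalars k) hc

theorem adjoin_image_algebraMap_eq_top {A : Type*} [CommRing A] [Algebra k A] [Algebra A K]
    [IsScalarTower k A K] [IsFractionRing A K] {s : Set A} (hs : Algebra.adjoin k s = ⊤) :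
    IntermediateField.adjoin k (algebraMap A K '' s) = ⊤ := by
  have hrange : (IsScalarTower.toAlgHom k A K).range = Algebra.adjoin k (algebraMap A K '' s) := by
    rw [← Algebra.map_top, ← hs, AlgHom.map_adjoin, IsScalarTower.coe_toAlgHom']
  rw [← IsFractionRing.algHom_fieldRange_eq_of_comp_eq_of_range_eq (f := AlgHom.id k K) rfl hrange]
  exact AlgHom.fieldRange_eq_top.2 Function.surjective_id

theorem adjoin_range_mk_X_eq_top {σ R : Type*} [CommRing R] (I : Ideal (MvPolynomial σ R)) :
    Algebra.adjoin R (Set.range fun i => Ideal.Quotient.mk I (X i)) = ⊤ := by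
  have h := congrArg (Subalgebra.map (Ideal.Quotient.mkₐ R I)) (adjoin_range_X (R := R) (σ := σ))
  rw [AlgHom.map_adjoin, ← Set.range_comp, Algebra.map_top] at h
  exact h.trans ((AlgHom.range_eq_top _).2 (Ideal.Quotient.mkₐ_surjective R I))

variable {A : Type*} [CommRing A] [Algebra k A]

theorem exists_fractionRing_quotient_ker_algEquiv (f : A →ₐ[k] K)
    (hf : IntermediateField.adjoin k (f.range : Set K) = ⊤) :
    ∃ e : FractionRing (A ⧸ RingHom.ker f) ≃ₐ[k] K, ∀ a : A,
      e (algebraMap (A ⧸ RingHom.ker f) (FractionRing (A ⧸ RingHom.ker f))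
        (Ideal.Quotient.mk (RingHom.ker f) a)) = f a := by
  have : (RingHom.ker f).IsPrime := RingHom.ker_isPrime f
  have hinj : Function.Injective (Ideal.kerLiftAlg f) := Ideal.kerLiftAlg_injective f
  let g : FractionRing (A ⧸ RingHom.ker f) →ₐ[k] K := IsFractionRing.liftAlgHom hinj
  have hg : Function.Surjective g := by
    rw [← AlgHom.fieldRange_eq_top, IsFractionRing.liftAlgHom_fieldRange hinj, ← hf]
    congr 1
    ext
    simp [Ideal.Quotient.mk_surjective.exists]
  exact ⟨.ofBijective g ⟨g.toRingHom.injective, hg⟩,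
    fun a => IsFractionRing.lift_algebraMap hinj (Ideal.Quotient.mk _ a)⟩

theorem ringKrullDim_quotient_ker_eq_toENat_trdeg [Algebra.FiniteType k A] (f : A →ₐ[k] K)
    (hf : IntermediateField.adjoin k (f.range : Set K) = ⊤) :
    ringKrullDim (A ⧸ RingHom.ker f) = (Algebra.trdeg k K).toENat := by
  have : (RingHom.ker f).IsPrime := RingHom.ker_isPrime f
  rw [ringKrullDim_eq_toENat_trdeg_of_isFractionRing k _ (FractionRing (A ⧸ RingHom.ker f))]
  obtain ⟨e, -⟩ := exists_fractionRing_quotient_ker_algEquiv f hf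
  simpa using congrArg Cardinal.toENat e.lift_trdeg_eq

end FunctionField

section IdealOfVars

variable {σ τ R S : Type*} [CommRing R] [CommRing S] [Algebra R S]

theorem ker_constantCoeff_eq_idealOfVars :
    RingHom.ker (constantCoeff : MvPolynomial σ R →+* R) = idealOfVars σ R := by
  ext p
  rw [← pow_one (idealOfVars σ R), mem_pow_idealOfVars_iff']
  simp [RingHom.mem_ker, constantCoeff_eq, Finsupp.degree_eq_zero_iff]

theorem comap_bind₁_idealOfVars_le {q : σ → MvPolynomial τ R} (hq : ∀ i, q i ∈ idealOfVars τ R) :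
    (idealOfVars τ R).comap (bind₁ q) ≤ idealOfVars σ R := by
  simp only [← ker_constantCoeff_eq_idealOfVars, RingHom.mem_ker] at hq ⊢
  have h : (constantCoeff.comp (bind₁ q).toRingHom) = constantCoeff :=
    MvPolynomial.ringHom_ext (by simp) (by simpa using hq)
  intro p hp
  rw [RingHom.mem_ker, ← h]
  exact hp

theorem ker_aeval_algebraMap_mk_le_idealOfVars {I : Ideal (MvPolynomial τ R)}
    (hI : I ≤ idealOfVars τ R) [Algebra (MvPolynomial τ R ⧸ I) S]
    [IsScalarTower R (MvPolynomial τ R ⧸ I) S] [FaithfulSMul (MvPolynomial τ R ⧸ I) S]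
    {q : σ → MvPolynomial τ R} (hq : ∀ i, q i ∈ idealOfVars τ R) :
    RingHom.ker (aeval (R := R) fun i =>
      algebraMap (MvPolynomial τ R ⧸ I) S (Ideal.Quotient.mk I (q i))) ≤ idealOfVars σ R := by
  let ψ : MvPolynomial τ R →ₐ[R] S :=
    (IsScalarTower.toAlgHom R (MvPolynomial τ R ⧸ I) S).comp (Ideal.Quotient.mkₐ R I)
  have hψ : RingHom.ker ψ ≤ I := fun p hp => Ideal.Quotient.eq_zero_iff_mem.1 <|
    FaithfulSMul.algebraMap_injective (MvPolynomial τ R ⧸ I) S (hp.trans (map_zero _).symm)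
  refine le_trans (fun p hp => hI (hψ ?_)) (comap_bind₁_idealOfVars_le hq)
  rw [RingHom.mem_ker, bind₁, ← AlgHom.comp_apply, comp_aeval]
  exact hp

end IdealOfVars

/-- By Steinitz's theorem, finiteness of the set of intermediate fields says that `K` is a finite
simple extension of `k(x)`; for a curve in characteristic zero this holds for every transcendental
coordinate `x`. -/
theorem space_curve_birational_to_plane_curve_general {k : Type*} [Field k] [Infinite k]
    (P : Ideal (MvPolynomial (Fin 3) k))
    (hP : P ≤ Ideal.span {X 0, X 1, X 2})
    (K : Type*) [Field K] [Algebra (MvPolynomial (Fin 3) k ⧸ P) K]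
    [IsFractionRing (MvPolynomial (Fin 3) k ⧸ P) K]
    [Algebra k K] [IsScalarTower k (MvPolynomial (Fin 3) k ⧸ P) K]
    (x y z : K) [Finite (IntermediateField (IntermediateField.adjoin k {x}) K)]
    (hx : x = algebraMap (MvPolynomial (Fin 3) k ⧸ P) K (Ideal.Quotient.mk P (X 0)))
    (hy : y = algebraMap (MvPolynomial (Fin 3) k ⧸ P) K (Ideal.Quotient.mk P (X 1)))
    (hz : z = algebraMap (MvPolynomial (Fin 3) k ⧸ P) K (Ideal.Quotient.mk P (X 2))) :
    ∃ lam : k,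
      IntermediateField.adjoin k {x, y + algebraMap k K lam * z} = ⊤ ∧
      ∀ J : Ideal (MvPolynomial (Fin 2) k),
        J = RingHom.ker (MvPolynomial.aeval
              (R := k) ![x, y + algebraMap k K lam * z]).toRingHom →
        J.IsPrime ∧
        J ≤ Ideal.span {X 0, X 1} ∧
        ringKrullDim (MvPolynomial (Fin 2) k ⧸ J) = ringKrullDim (MvPolynomial (Fin 3) k ⧸ P) ∧
        ∃ e : FractionRing (MvPolynomial (Fin 2) k ⧸ J) ≃ₐ[k] K,
          ∀ p : MvPolynomial (Fin 2) k,
            e (algebraMap (MvPolynomial (Fin 2) k ⧸ J)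
                (FractionRing (MvPolynomial (Fin 2) k ⧸ J)) (Ideal.Quotient.mk J p)) =
              MvPolynomial.aeval ![x, y + algebraMap k K lam * z] p := by
  have hxyz : IntermediateField.adjoin k {x, y, z} = ⊤ := by
    rw [hx, hy, hz, ← adjoin_image_algebraMap_eq_top (K := K) (adjoin_range_mk_X_eq_top P),
      ← Set.range_comp, range_fin_three]
    rfl
  obtain ⟨c, hc⟩ := exists_adjoin_pair_eq_adjoin_triple (k := k) x y z
  have htop := hc.trans hxyz
  refine ⟨c, htop, ?_⟩
  rintro J (rfl : J = RingHom.ker (aeval (R := k) ![x, y + algebraMap k K c * z]))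
  have hv : ![x, y + algebraMap k K c * z] = fun i => algebraMap (MvPolynomial (Fin 3) k ⧸ P) K
      (Ideal.Quotient.mk P (![X 0, X 1 + C c * X 2] i)) := by
    have hC : algebraMap (MvPolynomial (Fin 3) k ⧸ P) K (Ideal.Quotient.mk P (C c)) =
      algebraMap k K c := (IsScalarTower.algebraMap_apply k _ K c).symm
    ext i
    fin_cases i <;> simp [hx, hy, hz, hC]
  have hrange : IntermediateField.adjoin k
      ((aeval (R := k) ![x, y + algebraMap k K c * z]).range : Set K) = ⊤ := by
    rw [← top_le_iff, ← htop, ← Algebra.adjoin_range_eq_range_aeval, range_fin_two]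
    exact IntermediateField.adjoin.mono _ _ _ Algebra.subset_adjoin
  refine ⟨RingHom.ker_isPrime _, ?_, ?_, exists_fractionRing_quotient_ker_algEquiv _ hrange⟩
  · rw [← range_fin_two X, hv]
    rw [← range_fin_three X] at hP
    refine ker_aeval_algebraMap_mk_le_idealOfVars hP (Fin.forall_fin_two.2 ⟨?_, ?_⟩)
    · exact Ideal.subset_span ⟨0, rfl⟩
    · exact add_mem (Ideal.subset_span ⟨1, rfl⟩)
        (Ideal.mul_mem_left _ _ (Ideal.subset_span ⟨2, rfl⟩))
  · rw [ringKrullDim_quotient_ker_eq_toENat_trdeg _ hrange,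
      ringKrullDim_eq_toENat_trdeg_of_isFractionRing k _ K]

/-- For an irreducible space curve through the origin with coordinate ring
`R = ℝ[X,Y,Z]/P` and function field `K`, with `x` transcendental over `ℝ`: there is
`λ ∈ ℝ` such that `K = ℝ⟮x, y + λz⟯`, and the kernel `J` of the `ℝ`-algebra map
`Φ : ℝ[S,T] → K`, `S ↦ x`, `T ↦ y + λz`, is a prime ideal contained in `(S,T)`,
with `ℝ[S,T]/J` of Krull dimension `1`, `Φ` inducing an `ℝ`-algebra isomorphism from
the fraction field of `ℝ[S,T]/J` onto `K`. -/
theorem space_curve_birational_to_plane_curve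
    (P : Ideal (MvPolynomial (Fin 3) ℝ)) [P.IsPrime]
    (hP : P ≤ Ideal.span {X 0, X 1, X 2})
    (hdim : ringKrullDim (MvPolynomial (Fin 3) ℝ ⧸ P) = 1)
    (K : Type) [Field K] [Algebra (MvPolynomial (Fin 3) ℝ ⧸ P) K]
    [IsFractionRing (MvPolynomial (Fin 3) ℝ ⧸ P) K]
    [Algebra ℝ K] [IsScalarTower ℝ (MvPolynomial (Fin 3) ℝ ⧸ P) K]
    (x y z : K)
    (hx : x = algebraMap (MvPolynomial (Fin 3) ℝ ⧸ P) K (Ideal.Quotient.mk P (X 0)))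
    (hy : y = algebraMap (MvPolynomial (Fin 3) ℝ ⧸ P) K (Ideal.Quotient.mk P (X 1)))
    (hz : z = algebraMap (MvPolynomial (Fin 3) ℝ ⧸ P) K (Ideal.Quotient.mk P (X 2)))
    (hxt : Transcendental ℝ x) :
    ∃ lam : ℝ,
      IntermediateField.adjoin ℝ {x, y + algebraMap ℝ K lam * z} = ⊤ ∧
      ∀ J : Ideal (MvPolynomial (Fin 2) ℝ),
        J = RingHom.ker (MvPolynomial.aeval
              (R := ℝ) ![x, y + algebraMap ℝ K lam * z]).toRingHom →
        J.IsPrime ∧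
        J ≤ Ideal.span {X 0, X 1} ∧
        ringKrullDim (MvPolynomial (Fin 2) ℝ ⧸ J) = 1 ∧
        ∃ e : FractionRing (MvPolynomial (Fin 2) ℝ ⧸ J) ≃ₐ[ℝ] K,
          ∀ p : MvPolynomial (Fin 2) ℝ,
            e (algebraMap (MvPolynomial (Fin 2) ℝ ⧸ J)
                (FractionRing (MvPolynomial (Fin 2) ℝ ⧸ J)) (Ideal.Quotient.mk J p)) =
              MvPolynomial.aeval ![x, y + algebraMap ℝ K lam * z] p := by
  have := finite_intermediateField_adjoin_simple_of_ringKrullDim_eq_one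
    (MvPolynomial (Fin 3) ℝ ⧸ P) hdim hxt
  simpa only [hdim] using space_curve_birational_to_plane_curve_general P hP K x y z hx hy hz
end

section
/- Let h ∈ ℝ[x,y,z] be irreducible with h(O) = 0 and ∇h(O) ≠ (0,0,0), where O = (0,0,0) (so the origin lies in the nonsingular locus of the surface V(h)). Then there exist real constants A, B, C > 0 such that the ideal of ℂ[x,y,z] generated by h^ℂ and D_{A,B,C}(h)^ℂ has height at least 2; equivalently, the quotient ring ℂ[x,y,z]/(h^ℂ, D_{A,B,C}(h)^ℂ) has Krull dimension at most 1. -/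
open MvPolynomial

/-- The polynomial `D_{A,B,C}(h)`: determinant of the matrix with rows `(Ax, By, Cz)`,
`(x, y, z)` and `(∂h/∂x, ∂h/∂y, ∂h/∂z)`. -/
noncomputable def Dpoly (A B C : ℝ) (h : MvPolynomial (Fin 3) ℝ) : MvPolynomial (Fin 3) ℝ :=
  Matrix.det (Matrix.of
    ![![MvPolynomial.C A * X 0, MvPolynomial.C B * X 1, MvPolynomial.C C * X 2],
      ![X 0, X 1, X 2],
      ![pderiv 0 h, pderiv 1 h, pderiv 2 h]])

/-! The determinant `D_{A,B,C}(h)` is linear in `(A, B, C)`, vanishes at `(1, 1, 1)`, and its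
coefficients are the products `x_i * L_{jk} h` of a coordinate with the rotation
`L_{jk} = x_k ∂_j - x_j ∂_k` in the two other coordinates. If `h` divided all the determinants with
positive weights, it would therefore divide each `x_i * L_{jk} h`; being prime, it divides at most
one coordinate, so every index `j` occurs in some `L_{jk} h` divisible by `h`. Differentiating
`L_{jk} h = h q` at the origin gives `a = b c` and `b = -a c` for `a = ∂_j h(0)`, `b = ∂_k h(0)`,
`c = q(0)`, whence `a (1 + c²) = 0` and `a = 0`: the origin would be a singular point. So some
determinant is not divisible by the prime `h`; the two successive quotients lower the dimension by
at least two over `ℝ`, and an integral base change does not increase it. -/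

section KrullDimension

variable {R S : Type*} [CommRing R] [CommRing S]

variable (R S) in
theorem ringKrullDim_le_of_isIntegral [Algebra R S] [Algebra.IsIntegral R S] :
    ringKrullDim S ≤ ringKrullDim R :=
  Order.krullDim_le_of_strictMono (PrimeSpectrum.comap (algebraMap R S)) fun _ _ hlt ↦
    Ideal.IsIntegral.comap_lt_comap hlt

theorem ringKrullDim_quotient_anti {I J : Ideal R} (hIJ : I ≤ J) :
    ringKrullDim (R ⧸ J) ≤ ringKrullDim (R ⧸ I) :=
  ringKrullDim_le_of_surjective (Ideal.Quotient.factor hIJ) (Ideal.Quotient.factor_surjective hIJ)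

theorem ringKrullDim_quotient_map_le_of_isIntegral [Algebra R S] [Algebra.IsIntegral R S]
    (I : Ideal R) : ringKrullDim (S ⧸ I.map (algebraMap R S)) ≤ ringKrullDim (R ⧸ I) :=
  (ringKrullDim_le_of_isIntegral (R ⧸ (I.map (algebraMap R S)).comap (algebraMap R S)) _).trans
    (ringKrullDim_quotient_anti Ideal.le_comap_map)

attribute [local instance] MvPolynomial.algebraMvPolynomial in
theorem ringKrullDim_mvPolynomial_quotient_map_le_of_isIntegral {σ : Type*} [Algebra R S]
    [Algebra.IsIntegral R S] (I : Ideal (MvPolynomial σ R)) :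
    ringKrullDim (MvPolynomial σ S ⧸ I.map (MvPolynomial.map (algebraMap R S))) ≤
      ringKrullDim (MvPolynomial σ R ⧸ I) :=
  ringKrullDim_quotient_map_le_of_isIntegral I

theorem ringKrullDim_quotient_span_pair_add_two_le [IsDomain R] {p d : R} (hp : Prime p)
    (hpd : ¬p ∣ d) : ringKrullDim (R ⧸ Ideal.span {p, d}) + 2 ≤ ringKrullDim R := by
  have : (Ideal.span {p}).IsPrime := (Ideal.span_singleton_prime hp.ne_zero).2 hp
  have hle : Ideal.span {p} ≤ Ideal.span {p, d} := Ideal.span_mono (by simp)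
  have hd_ne : Ideal.Quotient.mk (Ideal.span {p}) d ≠ 0 := by
    rwa [Ne, Ideal.Quotient.eq_zero_iff_mem, Ideal.mem_span_singleton]
  have hd_zero : Ideal.Quotient.factor hle (Ideal.Quotient.mk _ d) = 0 := by
    rw [Ideal.Quotient.factor_mk, Ideal.Quotient.eq_zero_iff_mem]
    exact Ideal.subset_span (by simp)
  calc ringKrullDim (R ⧸ Ideal.span {p, d}) + 2
      = ringKrullDim (R ⧸ Ideal.span {p, d}) + 1 + 1 := by rw [add_assoc, one_add_one_eq_two]
    _ ≤ ringKrullDim (R ⧸ Ideal.span {p}) + 1 := by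
        gcongr
        exact ringKrullDim_succ_le_of_surjective _ (Ideal.Quotient.factor_surjective hle)
          (mem_nonZeroDivisors_of_ne_zero hd_ne) hd_zero
    _ ≤ ringKrullDim R :=
        ringKrullDim_quotient_succ_le_of_nonZeroDivisor (mem_nonZeroDivisors_of_ne_zero hp.ne_zero)

theorem ringKrullDim_mvPolynomial_quotient_span_pair_add_two_le {σ k K : Type*} [Finite σ] [Field k]
    [CommRing K] [Algebra k K] [Algebra.IsIntegral k K] {p d : MvPolynomial σ k} (hp : Prime p)
    (hpd : ¬p ∣ d) :
    ringKrullDim (MvPolynomial σ K ⧸ Ideal.span {MvPolynomial.map (algebraMap k K) p,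
      MvPolynomial.map (algebraMap k K) d}) + 2 ≤ Nat.card σ := by
  calc _ = ringKrullDim (MvPolynomial σ K ⧸
          (Ideal.span {p, d}).map (MvPolynomial.map (algebraMap k K))) + 2 := by
        rw [Ideal.map_span, Set.image_pair]
    _ ≤ ringKrullDim (MvPolynomial σ k ⧸ Ideal.span {p, d}) + 2 := by
        gcongr
        exact ringKrullDim_mvPolynomial_quotient_map_le_of_isIntegral _
    _ ≤ ringKrullDim (MvPolynomial σ k) := ringKrullDim_quotient_span_pair_add_two_le hp hpd
    _ = Nat.card σ := by
        rw [MvPolynomial.ringKrullDim_of_isNoetherianRing, ringKrullDim_eq_zero_of_field, zero_add]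

end KrullDimension

theorem isRelPrime_X_X {σ R : Type*} [CommRing R] [IsDomain R] {i j : σ} (hij : i ≠ j) :
    IsRelPrime (X i : MvPolynomial σ R) (X j) :=
  X_prime.irreducible.isRelPrime_iff_not_dvd.2 fun h ↦ hij (X_dvd_X.1 h)

/-- The infinitesimal rotation `x_j ∂_i - x_i ∂_j` in the `(x_i, x_j)`-plane. The components of the
cross product of the position vector with the gradient of `h` have the form
`rotationDeriv i j h`. -/
noncomputable def rotationDeriv {σ R : Type*} [CommRing R] (i j : σ) :
    Derivation R (MvPolynomial σ R) (MvPolynomial σ R) :=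
  (X j : MvPolynomial σ R) • pderiv i - (X i : MvPolynomial σ R) • pderiv j

section RotationDeriv

variable {σ R : Type*} [CommRing R]

theorem rotationDeriv_apply (i j : σ) (h : MvPolynomial σ R) :
    rotationDeriv i j h = X j * pderiv i h - X i * pderiv j h :=
  rfl

theorem rotationDeriv_swap (i j : σ) (h : MvPolynomial σ R) :
    rotationDeriv j i h = -rotationDeriv i j h := by
  simp only [rotationDeriv_apply, neg_sub]

variable [LinearOrder R] [IsStrictOrderedRing R]

theorem eval_zero_pderiv_eq_zero_of_dvd_rotationDeriv {h : MvPolynomial σ R}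
    (h0 : eval (0 : σ → R) h = 0) {i j : σ} (hij : i ≠ j) (hdvd : h ∣ rotationDeriv i j h) :
    eval (0 : σ → R) (pderiv i h) = 0 := by
  obtain ⟨q, hq⟩ := hdvd
  rw [rotationDeriv_apply] at hq
  have hi : -eval 0 (pderiv j h) = eval 0 q * eval 0 (pderiv i h) := by
    simpa [-eval_zero, pderiv_X_of_ne hij.symm, h0]
      using congrArg (fun p ↦ eval (0 : σ → R) (pderiv i p)) hq
  have hj : eval 0 (pderiv i h) = eval 0 q * eval 0 (pderiv j h) := by
    simpa [-eval_zero, pderiv_X_of_ne hij, h0]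
      using congrArg (fun p ↦ eval (0 : σ → R) (pderiv j p)) hq
  have hmul : (1 + eval 0 q ^ 2) * eval 0 (pderiv i h) = 0 := by
    linear_combination hj - eval 0 q * hi
  exact (mul_eq_zero.1 hmul).resolve_left (by positivity)

theorem eval_zero_pderiv_eq_zero_of_dvd_X_mul_rotationDeriv {h : MvPolynomial (Fin 3) R}
    (hp : Prime h) (h0 : eval (0 : Fin 3 → R) h = 0)
    (hdvd : ∀ i, h ∣ X i * rotationDeriv (i + 2) (i + 1) h) (j : Fin 3) :
    eval (0 : Fin 3 → R) (pderiv j h) = 0 := by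
  have hrot (i : Fin 3) (hi : ¬h ∣ X i) : h ∣ rotationDeriv (i + 2) (i + 1) h :=
    (hp.dvd_or_dvd (hdvd i)).resolve_left hi
  by_cases hX : h ∣ X (j + 1)
  · have hX' : ¬h ∣ X (j + 2) := fun hX' ↦
      hp.not_isUnit (isRelPrime_X_X (i := j + 1) (j := j + 2) (by simp) hX hX')
    have hdvd_rot : h ∣ rotationDeriv j (j + 1) h := by
      simpa [show j + 2 + 1 = j by lia, show j + 2 + 2 = j + 1 by lia, rotationDeriv_swap j (j + 1)]
        using hrot (j + 2) hX'
    exact eval_zero_pderiv_eq_zero_of_dvd_rotationDeriv h0 (by simp) hdvd_rot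
  · have hdvd_rot : h ∣ rotationDeriv j (j + 2) h := by
      simpa [show j + 1 + 2 = j by lia, show j + 1 + 1 = j + 2 by lia] using hrot (j + 1) hX
    exact eval_zero_pderiv_eq_zero_of_dvd_rotationDeriv h0 (by simp) hdvd_rot

end RotationDeriv

/-- The determinant `Dpoly` over an arbitrary commutative ring, with the constants `A, B, C`
collected into a weight vector `w`. -/
noncomputable def ellipsoidDet {R : Type*} [CommRing R] (w : Fin 3 → R)
    (h : MvPolynomial (Fin 3) R) : MvPolynomial (Fin 3) R :=
  Matrix.det (Matrix.of
    ![![C (w 0) * X 0, C (w 1) * X 1, C (w 2) * X 2],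
      ![X 0, X 1, X 2],
      ![pderiv 0 h, pderiv 1 h, pderiv 2 h]])

theorem ellipsoidDet_one_add_single {R : Type*} [CommRing R] (i : Fin 3)
    (h : MvPolynomial (Fin 3) R) :
    ellipsoidDet (1 + Pi.single i 1) h = X i * rotationDeriv (i + 2) (i + 1) h := by
  fin_cases i <;> simp [ellipsoidDet, rotationDeriv_apply, Matrix.det_fin_three] <;> ring

theorem exists_pos_not_dvd_ellipsoidDet {R : Type*} [CommRing R] [LinearOrder R]
    [IsStrictOrderedRing R] {h : MvPolynomial (Fin 3) R} (hp : Prime h)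
    (h0 : eval (0 : Fin 3 → R) h = 0)
    (hgrad : (fun i ↦ eval (0 : Fin 3 → R) (pderiv i h)) ≠ 0) :
    ∃ w : Fin 3 → R, (∀ i, 0 < w i) ∧ ¬h ∣ ellipsoidDet w h := by
  by_contra! hdvd
  refine hgrad (funext (eval_zero_pderiv_eq_zero_of_dvd_X_mul_rotationDeriv hp h0 fun i ↦ ?_))
  rw [← ellipsoidDet_one_add_single]
  have hsingle : (0 : Fin 3 → R) ≤ Pi.single i 1 := Pi.single_nonneg.2 zero_le_one
  exact hdvd _ fun j ↦ add_pos_of_pos_of_nonneg one_pos (hsingle j)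

theorem exists_ellipsoid_constants_dim_le_one_general {k K : Type*} [Field k] [LinearOrder k]
    [IsStrictOrderedRing k] [CommRing K] [Algebra k K] [Algebra.IsIntegral k K]
    (h : MvPolynomial (Fin 3) k) (hirr : Irreducible h) (h0 : eval (0 : Fin 3 → k) h = 0)
    (hgrad : (fun i ↦ eval (0 : Fin 3 → k) (pderiv i h)) ≠ 0) :
    ∃ w : Fin 3 → k, (∀ i, 0 < w i) ∧
      ringKrullDim (MvPolynomial (Fin 3) K ⧸
        Ideal.span {MvPolynomial.map (algebraMap k K) h,
          MvPolynomial.map (algebraMap k K) (ellipsoidDet w h)}) ≤ 1 := by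
  obtain ⟨w, hw, hndvd⟩ := exists_pos_not_dvd_ellipsoidDet hirr.prime h0 hgrad
  refine ⟨w, hw, ?_⟩
  have hdim := ringKrullDim_mvPolynomial_quotient_span_pair_add_two_le (K := K) hirr.prime hndvd
  have hthree : (Nat.card (Fin 3) : WithBot ℕ∞) = 1 + 2 := by
    rw [Nat.card_fin]
    norm_num
  exact (ENat.WithBot.add_le_add_natCast_right_iff (c := 2)).1 (hdim.trans_eq hthree)

/-- For an irreducible surface `V(h)` that is nonsingular at the origin, suitable positive
constants `A, B, C` can be chosen so that the ideal `(h, D_{A,B,C}(h))` of `ℂ[x,y,z]` has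
height at least 2, i.e. the quotient has Krull dimension at most 1. -/
theorem exists_ellipsoid_constants_dim_le_one (h : MvPolynomial (Fin 3) ℝ)
    (hirr : Irreducible h) (h0 : eval (0 : Fin 3 → ℝ) h = 0)
    (hgrad : (fun i => eval (0 : Fin 3 → ℝ) (pderiv i h)) ≠ (0 : Fin 3 → ℝ)) :
    ∃ A B C : ℝ, 0 < A ∧ 0 < B ∧ 0 < C ∧
      ringKrullDim (MvPolynomial (Fin 3) ℂ ⧸
        Ideal.span {MvPolynomial.map (algebraMap ℝ ℂ) h,
          MvPolynomial.map (algebraMap ℝ ℂ) (Dpoly A B C h)}) ≤ 1 := by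
  obtain ⟨w, hw, hdim⟩ := exists_ellipsoid_constants_dim_le_one_general (K := ℂ) h hirr h0 hgrad
  exact ⟨w 0, w 1, w 2, hw 0, hw 1, hw 2, hdim⟩
end
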